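/- arXiv:2009.02896 — 3 statements merged into one kernel-verified Lean document; each statement's English description precedes it below -/
import Mathlib

section
/- Let d ≥ 1 be an integer and let s, s₁, s₂ be real numbers with s₁, s₂ ≥ 0, 0 ≤ s ≤ min(s₁, s₂), and s < s₁ + s₂ − d/2. Then there exists a constant C = C(s, s₁, s₂, d) > 0 such that for all u : ℤ^d → ℂ with ‖u‖_{ℓ²_{s₁}} < ∞ and v : ℤ^d → ℂ with ‖v‖_{ℓ²_{s₂}} < ∞, the convolution series (u*v)(n) = Σ_{m ∈ ℤ^d} u(n − m) v(m) converges absolutely for each n, and ‖u*v‖_{ℓ²_s} ≤ C ‖u‖_{ℓ²_{s₁}} ‖v‖_{ℓ²_{s₂}}. -/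
/-- Euclidean norm of a lattice point `n ∈ ℤ^d`, viewed as a vector in `ℝ^d`. -/
noncomputable def latNorm {d : ℕ} (n : Fin d → ℤ) : ℝ :=
  Real.sqrt (∑ i, ((n i : ℝ)) ^ 2)

lemma latNorm_eq {d : ℕ} (n : Fin d → ℤ) :
    latNorm n = ‖(WithLp.toLp 2 (fun i => (n i : ℝ)) : EuclideanSpace ℝ (Fin d))‖ := by
  simp [latNorm, EuclideanSpace.norm_eq]

lemma latNorm_nonneg {d : ℕ} (n : Fin d → ℤ) : 0 ≤ latNorm n := Real.sqrt_nonneg _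

lemma latNorm_add {d : ℕ} (n m : Fin d → ℤ) :
    latNorm n ≤ latNorm (n - m) + latNorm m := by
  rw [latNorm_eq, latNorm_eq, latNorm_eq]
  refine le_trans (le_of_eq ?_) (norm_add_le _ _)
  congr 1
  ext i
  simp

lemma summable_weight (d : ℕ) (r : ℝ) (hr : r < -(d : ℝ)) :
    Summable fun n : Fin d → ℤ => (1 + latNorm n) ^ r := by
  let b := (EuclideanSpace.basisFun (Fin d) ℝ).toBasis
  let L : Submodule ℤ (EuclideanSpace ℝ (Fin d)) := Submodule.span ℤ (Set.range b)
  have hrank : Module.finrank ℤ L = d := by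
    rw [ZLattice.rank ℝ L]; simp
  have hS := ZLattice.summable_norm_rpow L r (by rw [hrank]; exact hr)
  have hmem : ∀ n : Fin d → ℤ,
      (WithLp.toLp 2 (fun i => (n i : ℝ)) : EuclideanSpace ℝ (Fin d)) ∈ L := by
    intro n
    have : (WithLp.toLp 2 (fun i => (n i : ℝ)) : EuclideanSpace ℝ (Fin d))
        = ∑ i, n i • b i := by
      ext j
      simp [b, Finset.sum_apply, Pi.single_apply]
    rw [this]
    exact Submodule.sum_mem _ fun i _ =>
      Submodule.smul_mem _ _ (Submodule.subset_span ⟨i, rfl⟩)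
  let φ : (Fin d → ℤ) → L := fun n => ⟨_, hmem n⟩
  have hφ : Function.Injective φ := by
    intro n m h
    have h1 := congrArg Subtype.val h
    ext i
    have h2 := congrArg (fun x : EuclideanSpace ℝ (Fin d) => x i) h1
    simpa [φ] using h2
  have h3 := hS.comp_injective hφ
  refine Summable.of_norm_bounded_eventually h3 ?_
  have : ∀ᶠ n : Fin d → ℤ in Filter.cofinite, n ≠ 0 := by
    simp [Filter.eventually_cofinite]
  filter_upwards [this] with n hn
  have hd0 : (0 : ℝ) ≤ d := Nat.cast_nonneg d
  have hpos : 0 < latNorm n := by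
    rw [latNorm_eq, norm_pos_iff]
    intro h
    apply hn
    ext i
    have h2 := congrArg (fun x : EuclideanSpace ℝ (Fin d) => x i) h
    simpa using h2
  have e : ‖φ n‖ = latNorm n := by rw [latNorm_eq]; rfl
  simp only [Function.comp, e]
  rw [Real.norm_of_nonneg (by positivity)]
  exact Real.rpow_le_rpow_of_nonpos hpos (by linarith) (by linarith)

lemma cs_tsum {ι : Type*} (t f g : ι → ℝ) (ht : ∀ i, 0 ≤ t i) (hf : ∀ i, 0 ≤ f i)
    (hg : ∀ i, 0 ≤ g i) (hle : ∀ i, t i ≤ f i * g i)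
    (hfs : Summable fun i => f i ^ 2) (hgs : Summable fun i => g i ^ 2) :
    Summable t ∧ (∑' i, t i) ^ 2 ≤ (∑' i, f i ^ 2) * ∑' i, g i ^ 2 := by
  have h := Real.summable_and_inner_le_Lp_mul_Lq_tsum_of_nonneg
    (p := 2) (q := 2) Real.HolderConjugate.two_two hf hg
    (by simpa using hfs) (by simpa using hgs)
  have hs : Summable t := h.1.of_nonneg_of_le ht hle
  refine ⟨hs, ?_⟩
  have h1 : ∑' i, t i ≤ ∑' i, f i * g i := hs.tsum_le_tsum hle h.1
  have h2 := h1.trans h.2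
  simp only [Real.rpow_two, ← Real.sqrt_eq_rpow] at h2
  have h0 : 0 ≤ ∑' i, t i := tsum_nonneg ht
  have hF : 0 ≤ ∑' i, f i ^ 2 := tsum_nonneg fun i => by positivity
  have hG : 0 ≤ ∑' i, g i ^ 2 := tsum_nonneg fun i => by positivity
  calc (∑' i, t i) ^ 2 ≤ (√(∑' i, f i ^ 2) * √(∑' i, g i ^ 2)) ^ 2 := by gcongr
    _ = _ := by rw [mul_pow, Real.sq_sqrt hF, Real.sq_sqrt hG]

lemma weight_aux (c a b s s₁ s₂ : ℝ) (hc : 0 ≤ c) (ha : 1 ≤ a) (hb : 1 ≤ b) (hcab : c ≤ a + b)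
    (hs0 : 0 ≤ s) (hs1 : s ≤ s₁) (hba : b ≤ a) :
    c ^ s ≤ 2 ^ s * b ^ (-(s₁ + s₂ - s)) * (a ^ s₁ * b ^ s₂) := by
  have ha0 : 0 < a := by linarith
  have hb0 : 0 < b := by linarith
  calc c ^ s ≤ (2 * a) ^ s := Real.rpow_le_rpow hc (by linarith) hs0
    _ = 2 ^ s * (a ^ (s - s₁) * a ^ s₁) := by
        rw [Real.mul_rpow (by norm_num) ha0.le, ← Real.rpow_add ha0]; simp
    _ ≤ 2 ^ s * (b ^ (s - s₁) * a ^ s₁) := by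
        have := Real.rpow_le_rpow_of_nonpos hb0 hba (by linarith : s - s₁ ≤ 0)
        gcongr
    _ = 2 ^ s * b ^ (-(s₁ + s₂ - s)) * (a ^ s₁ * b ^ s₂) := by
        have : s - s₁ = -(s₁ + s₂ - s) + s₂ := by ring
        rw [this, Real.rpow_add hb0]; ring

lemma weight_le (c a b s s₁ s₂ : ℝ) (hc : 0 ≤ c) (ha : 1 ≤ a) (hb : 1 ≤ b) (hcab : c ≤ a + b)
    (hs0 : 0 ≤ s) (hs1 : s ≤ s₁) (hs2 : s ≤ s₂) :
    c ^ s ≤ 2 ^ s * (a ^ (-(s₁ + s₂ - s)) + b ^ (-(s₁ + s₂ - s))) * (a ^ s₁ * b ^ s₂) := by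
  have ha0 : 0 < a := by linarith
  have hb0 : 0 < b := by linarith
  rcases le_total b a with h | h
  · refine (weight_aux c a b s s₁ s₂ hc ha hb hcab hs0 hs1 h).trans ?_
    have : 0 ≤ a ^ (-(s₁ + s₂ - s)) := by positivity
    gcongr
    linarith
  · refine (weight_aux c b a s s₂ s₁ hc hb ha (by linarith) hs0 hs2 h).trans ?_
    have : 0 ≤ b ^ (-(s₁ + s₂ - s)) := by positivity
    rw [mul_comm (b ^ s₂), add_comm s₂ s₁]
    gcongr
    linarith

lemma conv_nonneg {G : Type*} [AddCommGroup G] (P Q : G → ℝ) (hP : Summable P) (hQ : Summable Q)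
    (hP0 : ∀ x, 0 ≤ P x) (hQ0 : ∀ x, 0 ≤ Q x) :
    (∀ n, Summable fun m => P (n - m) * Q m) ∧ (Summable fun n => ∑' m, P (n - m) * Q m) ∧
    ∑' n, ∑' m, P (n - m) * Q m = (∑' n, P n) * ∑' n, Q n := by
  let e : G × G ≃ G × G :=
    { toFun := fun p => (p.1 - p.2, p.2)
      invFun := fun p => (p.1 + p.2, p.2)
      left_inv := fun p => by simp
      right_inv := fun p => by simp }
  have h := hP.mul_of_nonneg hQ hP0 hQ0
  have h' : Summable fun p : G × G => P (p.1 - p.2) * Q p.2 := (e.summable_iff).2 h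
  refine ⟨fun n => h'.prod_factor n, h'.prod, ?_⟩
  rw [hP.tsum_mul_tsum hQ h, ← h'.tsum_prod]
  exact e.tsum_eq (fun p : G × G => P p.1 * Q p.2)

/-- For `s₁, s₂ ≥ 0`, `0 ≤ s ≤ min(s₁, s₂)`, `s < s₁ + s₂ − d/2`, there is a
constant `C = C(s, s₁, s₂, d) > 0` such that for all `u ∈ ℓ²_{s₁}`, `v ∈ ℓ²_{s₂}` the
convolution `(u*v)(n) = ∑_m u(n−m) v(m)` converges absolutely at every `n`, and
`‖u*v‖_{ℓ²_s} ≤ C ‖u‖_{ℓ²_{s₁}} ‖v‖_{ℓ²_{s₂}}`. -/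
theorem stmt2 (d : ℕ) (hd : 1 ≤ d) (s s₁ s₂ : ℝ) (h₁ : 0 ≤ s₁) (h₂ : 0 ≤ s₂)
    (hs0 : 0 ≤ s) (hsmin : s ≤ min s₁ s₂) (hs : s < s₁ + s₂ - (d : ℝ) / 2) :
    ∃ C : ℝ, 0 < C ∧ ∀ u v : (Fin d → ℤ) → ℂ,
      (Summable fun n : Fin d → ℤ => (1 + latNorm n) ^ (2 * s₁) * ‖u n‖ ^ 2) →
      (Summable fun n : Fin d → ℤ => (1 + latNorm n) ^ (2 * s₂) * ‖v n‖ ^ 2) →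
      (∀ n : Fin d → ℤ, Summable fun m : Fin d → ℤ => ‖u (n - m) * v m‖) ∧
      (Summable fun n : Fin d → ℤ =>
        (1 + latNorm n) ^ (2 * s) * ‖∑' m : Fin d → ℤ, u (n - m) * v m‖ ^ 2) ∧
      Real.sqrt (∑' n : Fin d → ℤ,
          (1 + latNorm n) ^ (2 * s) * ‖∑' m : Fin d → ℤ, u (n - m) * v m‖ ^ 2)
        ≤ C * Real.sqrt (∑' n : Fin d → ℤ, (1 + latNorm n) ^ (2 * s₁) * ‖u n‖ ^ 2)
          * Real.sqrt (∑' n : Fin d → ℤ, (1 + latNorm n) ^ (2 * s₂) * ‖v n‖ ^ 2) := by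
  have hs1 : s ≤ s₁ := hsmin.trans (min_le_left _ _)
  have hs2 : s ≤ s₂ := hsmin.trans (min_le_right _ _)
  set σ : ℝ := s₁ + s₂ - s with hσ
  have hj : ∀ n : Fin d → ℤ, 1 ≤ 1 + latNorm n := fun n => by linarith [latNorm_nonneg n]
  have hj0 : ∀ n : Fin d → ℤ, 0 < 1 + latNorm n := fun n => by linarith [latNorm_nonneg n]
  have hW := summable_weight d (-(2 * σ)) (by rw [hσ]; linarith)
  set K : ℝ := ∑' n : Fin d → ℤ, (1 + latNorm n) ^ (-(2 * σ)) with hK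
  have hK0 : 0 ≤ K := tsum_nonneg fun n => Real.rpow_nonneg (hj0 n).le _
  set M : ℝ := (2 ^ s) ^ 2 * 2 * (K + K) with hM
  have hM0 : 0 ≤ M := by positivity
  refine ⟨√M + 1, by positivity, fun u v hu hv => ?_⟩
  set P : (Fin d → ℤ) → ℝ := fun n => (1 + latNorm n) ^ (2 * s₁) * ‖u n‖ ^ 2 with hP
  set Q : (Fin d → ℤ) → ℝ := fun n => (1 + latNorm n) ^ (2 * s₂) * ‖v n‖ ^ 2 with hQ
  have hP0 : ∀ n, 0 ≤ P n := fun n => mul_nonneg (Real.rpow_nonneg (hj0 n).le _) (by positivity)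
  have hQ0 : ∀ n, 0 ≤ Q n := fun n => mul_nonneg (Real.rpow_nonneg (hj0 n).le _) (by positivity)
  obtain ⟨hc1, hc2, hc3⟩ := conv_nonneg P Q hu hv hP0 hQ0
  have sqr : ∀ (n : Fin d → ℤ) (r : ℝ),
      ((1 + latNorm n) ^ r) ^ 2 = (1 + latNorm n) ^ (2 * r) := fun n r => by
    rw [← Real.rpow_mul_natCast (hj0 n).le]; congr 1; push_cast; ring
  have key : ∀ n : Fin d → ℤ,
      (Summable fun m => (1 + latNorm n) ^ s * ‖u (n - m) * v m‖) ∧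
      (∑' m, (1 + latNorm n) ^ s * ‖u (n - m) * v m‖) ^ 2
        ≤ M * ∑' m, P (n - m) * Q m := by
    intro n
    let f : (Fin d → ℤ) → ℝ := fun m =>
      2 ^ s * ((1 + latNorm (n - m)) ^ (-σ) + (1 + latNorm m) ^ (-σ))
    let g : (Fin d → ℤ) → ℝ := fun m =>
      ((1 + latNorm (n - m)) ^ s₁ * ‖u (n - m)‖) * ((1 + latNorm m) ^ s₂ * ‖v m‖)
    have hf0 : ∀ m, 0 ≤ f m := fun m => by
      have := hj0 m; have := hj0 (n - m); positivity
    have hg0 : ∀ m, 0 ≤ g m := fun m => by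
      have := hj0 m; have := hj0 (n - m); positivity
    have hg2 : ∀ m, g m ^ 2 = P (n - m) * Q m := fun m => by
      simp only [g, hP, hQ, mul_pow, sqr]
    have hW' : Summable fun m => (1 + latNorm (n - m)) ^ (-(2 * σ)) :=
      ((Equiv.subLeft n).summable_iff).2 hW
    have hWK : ∑' m, (1 + latNorm (n - m)) ^ (-(2 * σ)) = K :=
      (Equiv.subLeft n).tsum_eq (fun m => (1 + latNorm m) ^ (-(2 * σ)))
    have hf2 : ∀ m, f m ^ 2 ≤ (2 ^ s) ^ 2 * 2 *
        ((1 + latNorm (n - m)) ^ (-(2 * σ)) + (1 + latNorm m) ^ (-(2 * σ))) := fun m => by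
      have e1 := sqr (n - m) (-σ)
      have e2 := sqr m (-σ)
      rw [mul_neg] at e1 e2
      rw [← e1, ← e2]
      simp only [f]
      rw [mul_pow, mul_assoc]
      gcongr
      exact add_sq_le
    have hfb := (hW'.add hW).mul_left ((2 ^ s) ^ 2 * 2)
    have hfs : Summable fun m => f m ^ 2 :=
      hfb.of_nonneg_of_le (fun m => sq_nonneg _) hf2
    have hfM : ∑' m, f m ^ 2 ≤ M := by
      refine (hfs.tsum_le_tsum hf2 hfb).trans (le_of_eq ?_)
      rw [tsum_mul_left, hW'.tsum_add hW, hWK]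
    have hgs : Summable fun m => g m ^ 2 := by
      simp only [hg2]; exact hc1 n
    have hle : ∀ m, (1 + latNorm n) ^ s * ‖u (n - m) * v m‖ ≤ f m * g m := fun m => by
      have h := weight_le (1 + latNorm n) (1 + latNorm (n - m)) (1 + latNorm m) s s₁ s₂
        (hj0 n).le (hj _) (hj _) (by linarith [latNorm_add n m]) hs0 hs1 hs2
      rw [norm_mul]
      calc _ ≤ _ := mul_le_mul_of_nonneg_right h (by positivity)
        _ = _ := by simp only [f, g, hσ]; ring
    obtain ⟨A, B⟩ := cs_tsum _ f g (fun m => mul_nonneg (Real.rpow_nonneg (hj0 n).le _)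
      (norm_nonneg _)) hf0 hg0 hle hfs hgs
    refine ⟨A, B.trans ?_⟩
    simp only [hg2]
    exact mul_le_mul_of_nonneg_right hfM
      (tsum_nonneg fun m => mul_nonneg (hP0 _) (hQ0 _))
  have habs : ∀ n : Fin d → ℤ, Summable fun m : Fin d → ℤ => ‖u (n - m) * v m‖ := fun n =>
    (summable_mul_left_iff (Real.rpow_pos_of_pos (hj0 n) s).ne').1 (key n).1
  have hbd : ∀ n : Fin d → ℤ,
      (1 + latNorm n) ^ (2 * s) * ‖∑' m : Fin d → ℤ, u (n - m) * v m‖ ^ 2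
        ≤ M * ∑' m, P (n - m) * Q m := fun n => by
    refine le_trans ?_ (key n).2
    rw [tsum_mul_left, mul_pow, sqr]
    have := norm_tsum_le_tsum_norm (habs n)
    have := hj0 n
    gcongr
  have hR := hc2.mul_left M
  have hL : Summable fun n : Fin d → ℤ =>
      (1 + latNorm n) ^ (2 * s) * ‖∑' m : Fin d → ℤ, u (n - m) * v m‖ ^ 2 :=
    hR.of_nonneg_of_le
      (fun n => mul_nonneg (Real.rpow_nonneg (hj0 n).le _) (by positivity)) hbd
  refine ⟨habs, hL, ?_⟩
  have h1 := hL.tsum_le_tsum hbd hR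
  rw [tsum_mul_left, hc3] at h1
  refine (Real.sqrt_le_sqrt h1).trans ?_
  rw [Real.sqrt_mul hM0, Real.sqrt_mul (tsum_nonneg hP0), ← mul_assoc]
  gcongr
  linarith
end

section
/- Let d ≥ 1 be an integer, s > d, C₀ > 0, and let a, b : ℤ^d → ℂ satisfy |a(m)| ≤ C₀ (1 + |m|)^{−s} and |b(m)| ≤ C₀ (1 + |m|)^{−s} for all m ∈ ℤ^d. Then there exists a constant C = C(s, d) > 0, independent of a, b, p, q, such that for all p, q ∈ ℤ^d one has Σ_{ℓ ∈ ℤ^d} |a(p + ℓ)| |b(q + ℓ)| ≤ C C₀² (1 + |p − q|)^{−s}. -/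
lemma latNorm_sub_le {d : ℕ} (p q l : Fin d → ℤ) :
    latNorm (p - q) ≤ latNorm (p + l) + latNorm (q + l) := by
  simp only [latNorm_eq]
  refine le_trans (le_of_eq ?_) (norm_sub_le _ _)
  congr 1
  ext i
  simp

lemma summable_latNorm {d : ℕ} {s : ℝ} (hs : (d : ℝ) < s) :
    Summable fun n : Fin d → ℤ => (latNorm n) ^ (-s) := by
  let B := (EuclideanSpace.basisFun (Fin d) ℝ).toBasis
  let L := Submodule.span ℤ (Set.range B)
  have hr : Module.finrank ℤ L = d := by
    rw [ZLattice.rank ℝ L]; simp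
  have h := ZLattice.summable_norm_rpow L (-s) (by rw [hr]; linarith)
  have hm : ∀ n : Fin d → ℤ,
      (WithLp.toLp 2 (fun i => (n i : ℝ)) : EuclideanSpace ℝ (Fin d)) ∈ L := by
    intro n
    rw [Module.Basis.mem_span_iff_repr_mem]
    intro i
    exact ⟨n i, by simp [B]⟩
  let φ : (Fin d → ℤ) → L := fun n => ⟨_, hm n⟩
  have hφ : Function.Injective φ := by
    intro m n hmn
    have h1 := congrArg Subtype.val hmn
    funext i
    have h2 := congrArg (fun x : EuclideanSpace ℝ (Fin d) => x i) h1
    simpa [φ] using h2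
  refine (h.comp_injective hφ).congr fun n => ?_
  simp [φ, latNorm_eq]

lemma summable_one_add_latNorm {d : ℕ} {s : ℝ} (hs : (d : ℝ) < s) :
    Summable fun n : Fin d → ℤ => (1 + latNorm n) ^ (-s) := by
  have hs0 : 0 < s := lt_of_le_of_lt (Nat.cast_nonneg d) hs
  have h0 : Summable fun n : Fin d → ℤ => if n = 0 then (1 : ℝ) else 0 :=
    summable_of_ne_finset_zero (s := {0}) (by intro n hn; simpa using hn)
  refine Summable.of_nonneg_of_le (fun n => ?_) (fun n => ?_) ((summable_latNorm hs).add h0)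
  · have := latNorm_nonneg n
    positivity
  · have h1 := latNorm_nonneg n
    by_cases hn : n = 0
    · have h2 : (1 + latNorm n) ^ (-s) ≤ 1 :=
        Real.rpow_le_one_of_one_le_of_nonpos (by linarith) (by linarith)
      have h3 : 0 ≤ latNorm n ^ (-s) := by positivity
      simp only [hn, if_true] at *
      linarith
    · have h2 : 0 < latNorm n := by
        refine lt_of_le_of_ne h1 fun h => hn ?_
        rw [latNorm_eq, eq_comm, norm_eq_zero] at h
        funext i
        have h2 := congrArg (fun x : EuclideanSpace ℝ (Fin d) => x i) h
        simpa using h2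
      simp only [hn, if_false, add_zero]
      exact Real.rpow_le_rpow_of_nonpos h2 (by linarith) (by linarith)

lemma rpow_aux {u w s : ℝ} (hw : 0 < w) (hs : 0 < s) (h : w / 2 ≤ u) :
    u ^ (-s) ≤ 2 ^ s * w ^ (-s) := by
  have h1 := Real.rpow_le_rpow_of_nonpos (by positivity) h (by linarith : -s ≤ 0)
  rwa [Real.div_rpow hw.le (by norm_num), Real.rpow_neg (by norm_num : (0:ℝ) ≤ 2), div_inv_eq_mul,
    mul_comm] at h1

lemma prod_aux {u v w s : ℝ} (hu : 0 < u) (hv : 0 < v) (hw : 0 < w) (hs : 0 < s)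
    (h : w ≤ u + v) :
    u ^ (-s) * v ^ (-s) ≤ 2 ^ s * w ^ (-s) * (u ^ (-s) + v ^ (-s)) := by
  have hU : 0 < u ^ (-s) := by positivity
  have hV : 0 < v ^ (-s) := by positivity
  have hW : 0 < 2 ^ s * w ^ (-s) := by positivity
  rcases le_total (w / 2) u with h1 | h1
  · have := rpow_aux hw hs h1
    nlinarith
  · have := rpow_aux hw hs (by linarith : w / 2 ≤ v)
    nlinarith

/-- For `d ≥ 1`, `s > d`, `C₀ > 0` and `a, b : ℤ^d → ℂ` with
`|a(m)|, |b(m)| ≤ C₀ (1 + |m|)^{−s}`, there is `C = C(s, d) > 0`, independent of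
`a, b, p, q`, such that `∑_ℓ |a(p + ℓ)| |b(q + ℓ)| ≤ C C₀² (1 + |p − q|)^{−s}`. -/
theorem stmt6 (d : ℕ) (hd : 1 ≤ d) (s : ℝ) (hs : (d : ℝ) < s) :
    ∃ C : ℝ, 0 < C ∧ ∀ (C₀ : ℝ), 0 < C₀ → ∀ a b : (Fin d → ℤ) → ℂ,
      (∀ m : Fin d → ℤ, ‖a m‖ ≤ C₀ * (1 + latNorm m) ^ (-s)) →
      (∀ m : Fin d → ℤ, ‖b m‖ ≤ C₀ * (1 + latNorm m) ^ (-s)) →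
      ∀ p q : Fin d → ℤ,
        (Summable fun ℓ : Fin d → ℤ => ‖a (p + ℓ)‖ * ‖b (q + ℓ)‖) ∧
        (∑' ℓ : Fin d → ℤ, ‖a (p + ℓ)‖ * ‖b (q + ℓ)‖)
          ≤ C * C₀ ^ 2 * (1 + latNorm (p - q)) ^ (-s) := by
  have hs0 : 0 < s := lt_of_le_of_lt (Nat.cast_nonneg d) hs
  have hS := summable_one_add_latNorm hs
  obtain ⟨g, hg⟩ : ∃ g : (Fin d → ℤ) → ℝ, ∀ n, (1 + latNorm n) ^ (-s) = g n :=
    ⟨_, fun _ => rfl⟩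
  simp only [hg] at hS
  have hg0 : ∀ n, 0 ≤ g n := fun n => by
    have := latNorm_nonneg n
    rw [← hg]
    positivity
  have hT : 0 ≤ ∑' n, g n := tsum_nonneg hg0
  refine ⟨2 ^ s * (2 * ∑' n, g n + 1), by positivity, ?_⟩
  intro C₀ hC a b ha hb p q
  have hw0 := latNorm_nonneg (p - q)
  have hp : Summable fun l => g (p + l) := (Equiv.addLeft p).summable_iff.mpr hS
  have hq : Summable fun l => g (q + l) := (Equiv.addLeft q).summable_iff.mpr hS
  have tp : ∑' l, g (p + l) = ∑' l, g l := (Equiv.addLeft p).tsum_eq g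
  have tq : ∑' l, g (q + l) = ∑' l, g l := (Equiv.addLeft q).tsum_eq g
  obtain ⟨K, hK⟩ : ∃ K : ℝ, K = C₀ ^ 2 * (2 ^ s * (1 + latNorm (p - q)) ^ (-s)) := ⟨_, rfl⟩
  have hK0 : 0 ≤ K := by rw [hK]; positivity
  have hle : ∀ l, ‖a (p + l)‖ * ‖b (q + l)‖ ≤ K * (g (p + l) + g (q + l)) := by
    intro l
    have h1 := latNorm_nonneg (p + l)
    have h2 := latNorm_nonneg (q + l)
    have h3 := latNorm_sub_le p q l
    calc ‖a (p + l)‖ * ‖b (q + l)‖ ≤ (C₀ * g (p + l)) * (C₀ * g (q + l)) :=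
          mul_le_mul (by rw [← hg]; exact ha _) (by rw [← hg]; exact hb _) (norm_nonneg _)
            (mul_nonneg hC.le (hg0 _))
      _ = C₀ ^ 2 * (g (p + l) * g (q + l)) := by ring
      _ ≤ C₀ ^ 2 * (2 ^ s * (1 + latNorm (p - q)) ^ (-s) * (g (p + l) + g (q + l))) := by
          refine mul_le_mul_of_nonneg_left ?_ (by positivity)
          rw [← hg (p + l), ← hg (q + l)]
          exact prod_aux (by linarith) (by linarith) (by linarith) hs0 (by linarith)
      _ = K * (g (p + l) + g (q + l)) := by rw [hK]; ring
  have hR : Summable fun l => K * (g (p + l) + g (q + l)) := (hp.add hq).mul_left K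
  have hL : Summable fun l => ‖a (p + l)‖ * ‖b (q + l)‖ :=
    Summable.of_nonneg_of_le (fun l => by positivity) hle hR
  refine ⟨hL, (hL.tsum_le_tsum hle hR).trans ?_⟩
  rw [tsum_mul_left, hp.tsum_add hq, tp, tq]
  have : 2 ^ s * (2 * ∑' n, g n + 1) * C₀ ^ 2 * (1 + latNorm (p - q)) ^ (-s)
      = K * (∑' n, g n + ∑' n, g n) + K := by rw [hK]; ring
  rw [this]
  linarith
end

section
/- Let V : ℤ → ℝ be bounded, and let H, A, X be the discrete Schrödinger operator, the current operator, and the position operator on ℓ²(ℤ). Then for every ψ ∈ dom X one has Hψ ∈ dom X, and the commutator identity i(H(Xψ) − X(Hψ)) = Aψ holds; that is, the current operator A equals i[H, X] on dom X. -/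
open scoped ENNReal

noncomputable section

instance : Fact ((1 : ℝ≥0∞) ≤ 2) := ⟨by norm_num⟩

/-- Let `V : ℤ → ℝ` be bounded, and `H`, `A`, `X` the discrete Schrödinger
operator, the current operator, and the position operator on `ℓ²(ℤ)`. For every `ψ ∈ dom X`
one has `Hψ ∈ dom X`, and the commutator identity `i(H(Xψ) − X(Hψ)) = Aψ` holds, i.e. the
current operator `A` equals `i[H, X]` on `dom X`. -/
theorem stmt10 (V : ℤ → ℝ) (hV : ∃ M : ℝ, ∀ n : ℤ, |V n| ≤ M)
    (H A : lp (fun _ : ℤ => ℂ) 2 →L[ℂ] lp (fun _ : ℤ => ℂ) 2)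
    (hH : ∀ (ψ : lp (fun _ : ℤ => ℂ) 2) (n : ℤ),
      (H ψ) n = ψ (n - 1) + ψ (n + 1) + (V n : ℂ) * ψ n)
    (hA : ∀ (ψ : lp (fun _ : ℤ => ℂ) 2) (n : ℤ),
      (A ψ) n = Complex.I * (ψ (n + 1) - ψ (n - 1)))
    (ψ Xψ : lp (fun _ : ℤ => ℂ) 2)
    (hdom : Summable fun n : ℤ => (n : ℝ) ^ 2 * ‖ψ n‖ ^ 2)
    (hXψ : ∀ n : ℤ, Xψ n = (n : ℂ) * ψ n) :
    (Summable fun n : ℤ => (n : ℝ) ^ 2 * ‖(H ψ) n‖ ^ 2) ∧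
    ∀ n : ℤ, Complex.I * ((H Xψ) n - (n : ℂ) * (H ψ) n) = (A ψ) n := by
  have hcomm : ∀ n : ℤ, Complex.I * ((H Xψ) n - (n : ℂ) * (H ψ) n) = (A ψ) n := by
    intro n
    rw [hH, hH, hA, hXψ, hXψ, hXψ]
    push_cast
    ring
  refine ⟨?_, hcomm⟩
  have hs := (lp.memℓp (H Xψ + Complex.I • A ψ)).summable (by norm_num)
  refine hs.congr fun n => ?_
  have e : (H Xψ + Complex.I • A ψ) n = (n : ℂ) * (H ψ) n := by
    have h1 : (H Xψ + Complex.I • A ψ) n = (H Xψ) n + Complex.I * (A ψ) n := rfl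
    rw [h1, ← hcomm n, ← mul_assoc, Complex.I_mul_I]
    ring
  rw [e, norm_mul, Complex.norm_intCast]
  simp [mul_pow]
end
end
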